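/- Let H be a complex Hilbert space, M a von Neumann algebra acting on H, and ξ₀ a cyclic and separating vector for M. Let M₂ be a von Neumann subalgebra of M. If b ∈ M is positive and b ξ₀ lies in the closure of {c ξ₀ : c ∈ M₂, c ≥ 0}, then b ∈ M₂. -/

import Mathlib

open scoped InnerProductSpace
open Filter

variable {H : Type*} [NormedAddCommGroup H] [InnerProductSpace ℂ H] [CompleteSpace H]

/-- The positive cone `P♯`: the closure in `H` of `{a ξ₀ : a ∈ M, a positive}`. -/
def sharpCone (M : VonNeumannAlgebra H) (ξ₀ : H) : Set H :=
  closure {ζ : H | ∃ a : H →L[ℂ] H, a ∈ M ∧ a.IsPositive ∧ a ξ₀ = ζ}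

/-- `ξ₀` is a cyclic vector for `M`: the linear span of `{x ξ₀ : x ∈ M}` is dense in `H`. -/
def IsCyclicVector (M : VonNeumannAlgebra H) (ξ₀ : H) : Prop :=
  Dense ((Submodule.span ℂ ((fun x : H →L[ℂ] H => x ξ₀) '' (M : Set (H →L[ℂ] H)))) : Set H)

/-- `ξ₀` is a separating vector for `M`: `x ∈ M` and `x ξ₀ = 0` imply `x = 0`. -/
def IsSeparatingVector (M : VonNeumannAlgebra H) (ξ₀ : H) : Prop :=
  ∀ x : H →L[ℂ] H, x ∈ M → x ξ₀ = 0 → x = 0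

/-!
The vector `b ξ₀` is a limit of vectors `c ξ₀` with `c ∈ M₂` self-adjoint. For `z` and `w`
commuting with all these `c`, the identity `⟪z (c ξ₀), w ξ₀⟫ = ⟪z ξ₀, w (c ξ₀)⟫` involves `c` only
through `c ξ₀`, so it survives in the limit. Let `y` commute with `M₂`, let `x` and `w` commute with
`M`, hence with `b`, and take `z = y * x`: the limit says
`⟪y (b (x ξ₀)), w ξ₀⟫ = ⟪y (x ξ₀), b (w ξ₀)⟫`.
The vectors `x ξ₀` and `w ξ₀` span dense subspaces because `ξ₀` is separating for `M`, so
`y * b = b† * y`. The case `y = 1` says that `b` is self-adjoint; therefore `b` commutes with the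
commutant of `M₂`.
-/

section OrbitInvariance

variable {R E σ : Type*} [Semiring R] [AddCommMonoid E] [TopologicalSpace E] [Module R E]
  [SetLike σ (E →L[R] E)] [MulMemClass σ (E →L[R] E)]

theorem span_image_apply_mem_invtSubmodule {S : σ} {y : E →L[R] E} (hy : y ∈ S) (ξ : E) :
    Submodule.span R ((fun x : E →L[R] E => x ξ) '' (S : Set (E →L[R] E))) ∈
      Module.End.invtSubmodule (y : E →ₗ[R] E) := by
  rw [Module.End.mem_invtSubmodule, Submodule.span_le]
  rintro _ ⟨x, hx, rfl⟩
  exact Submodule.subset_span ⟨y * x, mul_mem hy hx, rfl⟩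

end OrbitInvariance

theorem IsSeparatingVector.isCyclicVector_commutant {M : VonNeumannAlgebra H} {ξ₀ : H}
    (hsep : IsSeparatingVector M ξ₀) : IsCyclicVector M.commutant ξ₀ := by
  let S := Submodule.span ℂ ((fun x : H →L[ℂ] H => x ξ₀) '' (M.commutant : Set (H →L[ℂ] H)))
  let K := S.topologicalClosure
  have : CompleteSpace K := S.isClosed_topologicalClosure.completeSpace_coe
  have hPM : K.starProjection ∈ M := by
    rw [VonNeumannAlgebra.IsStarProjection.mem_iff isStarProjection_starProjection]
    intro y hy
    rw [Submodule.range_starProjection]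
    exact S.topologicalClosure_mem_invtSubmodule (span_image_apply_mem_invtSubmodule hy ξ₀)
  have hξK : ξ₀ ∈ K := S.le_topologicalClosure (Submodule.subset_span ⟨1, one_mem _, rfl⟩)
  have hP_one : 1 - K.starProjection = 0 := by
    refine hsep _ (sub_mem (one_mem M) hPM) ?_
    simp [Submodule.starProjection_eq_self_iff.mpr hξK]
  intro v
  change v ∈ K
  rw [← Submodule.starProjection_eq_self_iff, ← sub_eq_zero.mp hP_one, one_apply_eq_self]

section SymmetricLimits

variable {𝕜 E : Type*} [RCLike 𝕜] [NormedAddCommGroup E] [InnerProductSpace 𝕜 E]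

theorem eq_of_inner_left_of_dense_span {D : Set E} (hD : Dense (Submodule.span 𝕜 D : Set E))
    {u v : E} (h : ∀ w ∈ D, ⟪u, w⟫_𝕜 = ⟪v, w⟫_𝕜) : u = v := by
  have huv : innerSL 𝕜 u = innerSL 𝕜 v := ContinuousLinearMap.ext_on hD h
  exact ext_inner_right 𝕜 fun w => congr($huv w)

variable {S T : Set (E →L[𝕜] E)} {ξ : E}

theorem inner_apply_comm_of_mem_closure (hS : ∀ c ∈ S, (c : E →ₗ[𝕜] E).IsSymmetric)
    {z w : E →L[𝕜] E} (hz : z ∈ S.centralizer) (hw : w ∈ S.centralizer) {ζ : E}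
    (hζ : ζ ∈ closure ((fun c : E →L[𝕜] E => c ξ) '' S)) :
    ⟪z ζ, w ξ⟫_𝕜 = ⟪z ξ, w ζ⟫_𝕜 := by
  have hclosed : IsClosed {η : E | ⟪z η, w ξ⟫_𝕜 = ⟪z ξ, w η⟫_𝕜} :=
    isClosed_eq (by fun_prop) (by fun_prop)
  refine closure_minimal ?_ hclosed hζ
  rintro _ ⟨c, hc, rfl⟩
  calc ⟪z (c ξ), w ξ⟫_𝕜
      = ⟪c (z ξ), w ξ⟫_𝕜 := congr(⟪$((hz c hc).symm) ξ, w ξ⟫_𝕜)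
    _ = ⟪z ξ, c (w ξ)⟫_𝕜 := hS c hc _ _
    _ = ⟪z ξ, w (c ξ)⟫_𝕜 := congr(⟪z ξ, $(hw c hc) ξ⟫_𝕜)

variable [CompleteSpace E]

theorem mul_eq_adjoint_mul_of_mem_closure (hS : ∀ c ∈ S, (c : E →ₗ[𝕜] E).IsSymmetric)
    (hT : Dense (Submodule.span 𝕜 ((fun x : E →L[𝕜] E => x ξ) '' T) : Set E))
    (hTS : T ⊆ S.centralizer) {b : E →L[𝕜] E} (hbT : b ∈ T.centralizer)
    (hbξ : b ξ ∈ closure ((fun c : E →L[𝕜] E => c ξ) '' S))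
    {y : E →L[𝕜] E} (hy : y ∈ S.centralizer) : y * b = b.adjoint * y := by
  refine ContinuousLinearMap.ext_on hT ?_
  rintro _ ⟨x, hx, rfl⟩
  refine eq_of_inner_left_of_dense_span (𝕜 := 𝕜) hT ?_
  rintro _ ⟨w, hw, rfl⟩
  have hb_comm : ∀ t ∈ T, t (b ξ) = b (t ξ) := fun t ht => congr($(hbT t ht) ξ)
  calc ⟪y (b (x ξ)), w ξ⟫_𝕜
      = ⟪(y * x) (b ξ), w ξ⟫_𝕜 := by rw [← hb_comm x hx]; rfl
    _ = ⟪(y * x) ξ, w (b ξ)⟫_𝕜 :=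
        inner_apply_comm_of_mem_closure hS (Set.mul_mem_centralizer hy (hTS hx)) (hTS hw) hbξ
    _ = ⟪y (x ξ), b (w ξ)⟫_𝕜 := by rw [hb_comm w hw]; rfl
    _ = ⟪b.adjoint (y (x ξ)), w ξ⟫_𝕜 := (b.adjoint_inner_left _ _).symm

theorem mem_centralizer_centralizer_of_mem_closure
    (hS : ∀ c ∈ S, (c : E →ₗ[𝕜] E).IsSymmetric)
    (hT : Dense (Submodule.span 𝕜 ((fun x : E →L[𝕜] E => x ξ) '' T) : Set E))
    (hTS : T ⊆ S.centralizer) {b : E →L[𝕜] E} (hbT : b ∈ T.centralizer)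
    (hbξ : b ξ ∈ closure ((fun c : E →L[𝕜] E => c ξ) '' S)) :
    b ∈ S.centralizer.centralizer := by
  have hcomm {y : E →L[𝕜] E} (hy : y ∈ S.centralizer) : y * b = b.adjoint * y :=
    mul_eq_adjoint_mul_of_mem_closure hS hT hTS hbT hbξ hy
  have hb_adjoint : b = b.adjoint := by simpa using hcomm Set.one_mem_centralizer
  intro y hy
  rw [hcomm hy, ← hb_adjoint]

end SymmetricLimits

theorem stmt7_general (M M₂ : VonNeumannAlgebra H) (ξ₀ : H) (hsep : IsSeparatingVector M ξ₀)
    (hsub : (M₂ : Set (H →L[ℂ] H)) ⊆ (M : Set (H →L[ℂ] H))) (b : H →L[ℂ] H) (hbM : b ∈ M)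
    (hbξ : b ξ₀ ∈ closure {ζ : H | ∃ c : H →L[ℂ] H, c ∈ M₂ ∧ IsSelfAdjoint c ∧ c ξ₀ = ζ}) :
    b ∈ M₂ := by
  let S : Set (H →L[ℂ] H) := {c | c ∈ M₂ ∧ IsSelfAdjoint c}
  have hSM₂ : S ⊆ M₂ := fun _ hc => hc.1
  have hcommutant_subset : (M.commutant : Set (H →L[ℂ] H)) ⊆ S.centralizer := by
    rw [VonNeumannAlgebra.coe_commutant]
    exact Set.centralizer_subset (hSM₂.trans hsub)
  have hb_commutant : b ∈ (M.commutant : Set (H →L[ℂ] H)).centralizer := by simpa using hbM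
  have hbξS : b ξ₀ ∈ closure ((fun c : H →L[ℂ] H => c ξ₀) '' S) := by
    simpa only [Set.image, S, Set.mem_ofPred_eq, and_assoc] using hbξ
  have hbS : b ∈ S.centralizer.centralizer :=
    mem_centralizer_centralizer_of_mem_closure (fun c hc => hc.2.isSymmetric)
      hsep.isCyclicVector_commutant hcommutant_subset hb_commutant hbξS
  rw [← SetLike.mem_coe, ← M₂.centralizer_centralizer]
  exact Set.centralizer_subset (Set.centralizer_subset hSM₂) hbS

/-- If `M₂ ⊆ M` is a von Neumann subalgebra, `b ∈ M` is positive and `b ξ₀`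
lies in the closure of `{c ξ₀ : c ∈ M₂, c ≥ 0}`, then `b ∈ M₂`. -/
theorem stmt7 (M M₂ : VonNeumannAlgebra H) (ξ₀ : H)
    (hcyc : IsCyclicVector M ξ₀) (hsep : IsSeparatingVector M ξ₀)
    (hsub : (M₂ : Set (H →L[ℂ] H)) ⊆ (M : Set (H →L[ℂ] H)))
    (b : H →L[ℂ] H) (hbM : b ∈ M) (hb_pos : b.IsPositive)
    (hbξ : b ξ₀ ∈ closure {ζ : H | ∃ c : H →L[ℂ] H, c ∈ M₂ ∧ c.IsPositive ∧ c ξ₀ = ζ}) :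
    b ∈ M₂ := by
  refine stmt7_general M M₂ ξ₀ hsep hsub b hbM (closure_mono ?_ hbξ)
  exact fun ζ ⟨c, hcM₂, hc_pos, hcζ⟩ => ⟨c, hcM₂, hc_pos.isSelfAdjoint, hcζ⟩
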